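/- Lower-tail exponential-moment bound for the IX estimator: for any γ > 0, any policy π, and i.i.d. observations (X_t, A_t, R_t)_{t=1}^n, E[exp(2γ·Σ_{t=1}^n (E[r̃_t(π)] − r̃_t(π) − γ·C_γ(π)))] ≤ 1, where r̃_t(π) = π(A_t|X_t)R_t/(μ(A_t|X_t)+γ) and E[r̃_t(π)] = v(π) − γ·C_γ(π). -/

import Mathlib

/-!
Write `Y = r̃(π)` for the IX estimate of one observation and `C = C_γ(π)`. Disintegrating the law of
one observation (`integral_obsLaw`) gives `E[Y] = v(π) - γ C`, because
`μ / (μ + γ) = 1 - γ / (μ + γ)`, and `E[Y²] ≤ C`, because `π`, `R` and `μ / (μ + γ)` all lie in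
`[0, 1]`. Since `Y ≥ 0` almost surely, the pointwise bound `exp (-y) ≤ 1 - y + y² / 2` for `y ≥ 0`
yields `E[exp (-2γ Y)] ≤ 1 - 2γ E[Y] + 2γ² C = 1 - u` with `u = 2γ (E[Y] - γ C)`, and
`exp u * (1 - u) ≤ 1` bounds the exponential moment of one observation. Under the product law of
the dataset the exponential of the sum integrates to the `n`-th power of that moment.
-/

open MeasureTheory ProbabilityTheory

/-- A stochastic contextual bandit instance: context distribution `ν`, behavior policy `μb`,
reward kernel `rker` supported on `[0,1]`, and mean reward function `r`. -/
structure CBSetup (𝓧 𝓐 : Type*) [MeasurableSpace 𝓧] [Fintype 𝓐] [MeasurableSpace 𝓐] where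
  /-- the context distribution -/
  ν : Measure 𝓧
  ν_prob : IsProbabilityMeasure ν
  /-- the behavior policy `μ(a|x)` -/
  μb : 𝓧 → 𝓐 → ℝ
  μb_nonneg : ∀ x a, 0 ≤ μb x a
  μb_sum_one : ∀ x, ∑ a, μb x a = 1
  μb_meas : ∀ a, Measurable fun x => μb x a
  /-- the reward kernel `p(·|x,a)` -/
  rker : 𝓧 → 𝓐 → Measure ℝ
  rker_prob : ∀ x a, IsProbabilityMeasure (rker x a)
  rker_supp : ∀ x a, rker x a (Set.Icc (0:ℝ) 1)ᶜ = 0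
  rker_meas : ∀ a, Measurable fun x => rker x a
  /-- the mean reward `r(x,a)` -/
  r : 𝓧 → 𝓐 → ℝ
  r_def : ∀ x a, r x a = ∫ ρ, ρ ∂(rker x a)
  r_meas : ∀ a, Measurable fun x => r x a

variable {𝓧 𝓐 : Type*} [MeasurableSpace 𝓧] [Fintype 𝓐] [MeasurableSpace 𝓐]
  [MeasurableSingletonClass 𝓐]

/-- The law of a single observation `(X, A, R)` with `X ~ ν`, `A ~ μ(·|X)`, `R ~ p(·|X,A)`. -/
noncomputable def obsLaw (S : CBSetup 𝓧 𝓐) : Measure (𝓧 × 𝓐 × ℝ) :=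
  S.ν.bind fun x => Measure.sum fun a =>
    ENNReal.ofReal (S.μb x a) • (S.rker x a).map fun ρ => (x, a, ρ)

/-- The law of the i.i.d. dataset `(X_t, A_t, R_t)_{t=1}^n`. -/
noncomputable def dataLaw (S : CBSetup 𝓧 𝓐) (n : ℕ) : Measure (Fin n → 𝓧 × 𝓐 × ℝ) :=
  Measure.pi fun _ : Fin n => obsLaw S

/-- A (stochastic, measurable) policy: a map from contexts to distributions over actions. -/
def IsPolicy (π : 𝓧 → 𝓐 → ℝ) : Prop :=
  (∀ x a, 0 ≤ π x a) ∧ (∀ x, ∑ a, π x a = 1) ∧ (∀ a, Measurable fun x => π x a)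

/-- The value `v(π) = E[Σ_a π(a|X) r(X,a)]` of a policy. -/
noncomputable def pval (S : CBSetup 𝓧 𝓐) (π : 𝓧 → 𝓐 → ℝ) : ℝ :=
  ∫ x, ∑ a, π x a * S.r x a ∂S.ν

/-- The smoothed coverage ratio `C_γ(π) = E[Σ_a π(a|X) r(X,a)/(μ(a|X)+γ)]`. -/
noncomputable def covγ (S : CBSetup 𝓧 𝓐) (γ : ℝ) (π : 𝓧 → 𝓐 → ℝ) : ℝ :=
  ∫ x, ∑ a, π x a * S.r x a / (S.μb x a + γ) ∂S.ν

/-- The IX reward estimate `r̃(π) = π(A|X) R / (μ(A|X) + γ)` for one observation `ω = (X,A,R)`. -/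
noncomputable def ixTerm (S : CBSetup 𝓧 𝓐) (γ : ℝ) (π : 𝓧 → 𝓐 → ℝ) (ω : 𝓧 × 𝓐 × ℝ) : ℝ :=
  π ω.1 ω.2.1 * ω.2.2 / (S.μb ω.1 ω.2.1 + γ)

/-- The IX value estimator `ṽ_n(π) = (1/n) Σ_t π(A_t|X_t) R_t / (μ(A_t|X_t) + γ)`. -/
noncomputable def ixEst (S : CBSetup 𝓧 𝓐) (γ : ℝ) {n : ℕ} (π : 𝓧 → 𝓐 → ℝ)
    (D : Fin n → 𝓧 × 𝓐 × ℝ) : ℝ :=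
  (∑ t, ixTerm S γ π (D t)) / n

set_option linter.unusedSectionVars false

/-- The conditional law of one observation `(X, A, R)` given `X`, as a Markov kernel. -/
noncomputable def obsKernel (S : CBSetup 𝓧 𝓐) : Kernel 𝓧 (𝓧 × 𝓐 × ℝ) where
  toFun x := Measure.sum fun a =>
    ENNReal.ofReal (S.μb x a) • (S.rker x a).map fun ρ => (x, a, ρ)
  measurable' := by
    refine Measure.measurable_of_measurable_coe _ fun s hs => ?_
    simp only [Measure.sum_apply _ hs, Measure.smul_apply, smul_eq_mul, tsum_fintype]
    refine Finset.measurable_sum _ fun a _ => (S.μb_meas a).ennreal_ofReal.mul ?_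
    let κ : Kernel 𝓧 ℝ := ⟨fun x => S.rker x a, S.rker_meas a⟩
    have : IsMarkovKernel κ := ⟨fun x => S.rker_prob x a⟩
    have hm : Measurable fun p : 𝓧 × ℝ => (p.1, a, p.2) := by fun_prop
    have h := Kernel.measurable_kernel_prodMk_left (κ := κ) (hm hs)
    have he : (fun x => ((S.rker x a).map fun ρ => (x, a, ρ)) s) =
        fun x => κ x (Prod.mk x ⁻¹' ((fun p : 𝓧 × ℝ => (p.1, a, p.2)) ⁻¹' s)) := by
      funext x
      rw [Measure.map_apply (by fun_prop) hs]
      rfl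
    rw [he]
    exact h

lemma obsLaw_eq (S : CBSetup 𝓧 𝓐) : obsLaw S = S.ν.bind (obsKernel S) := rfl

instance (S : CBSetup 𝓧 𝓐) : IsMarkovKernel (obsKernel S) := by
  refine ⟨fun x => ⟨?_⟩⟩
  have h : ∀ a, ((S.rker x a).map fun ρ => (x, a, ρ)) Set.univ = 1 := fun a => by
    have := S.rker_prob x a
    rw [Measure.map_apply (by fun_prop) MeasurableSet.univ]
    simp
  change (Measure.sum fun a =>
    ENNReal.ofReal (S.μb x a) • (S.rker x a).map fun ρ => (x, a, ρ)) Set.univ = 1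
  simp only [Measure.sum_apply _ MeasurableSet.univ, Measure.smul_apply, smul_eq_mul, h, mul_one,
    tsum_fintype]
  rw [← ENNReal.ofReal_sum_of_nonneg fun a _ => S.μb_nonneg x a, S.μb_sum_one, ENNReal.ofReal_one]

instance (S : CBSetup 𝓧 𝓐) : IsProbabilityMeasure (obsLaw S) := by
  have := S.ν_prob
  rw [obsLaw_eq]
  infer_instance

lemma rker_ae (S : CBSetup 𝓧 𝓐) (x : 𝓧) (a : 𝓐) : ∀ᵐ ρ ∂(S.rker x a), ρ ∈ Set.Icc (0 : ℝ) 1 :=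
  S.rker_supp x a

lemma obsLaw_ae (S : CBSetup 𝓧 𝓐) : ∀ᵐ ω ∂(obsLaw S), ω.2.2 ∈ Set.Icc (0 : ℝ) 1 := by
  have hs : MeasurableSet {ω : 𝓧 × 𝓐 × ℝ | ω.2.2 ∈ Set.Icc (0 : ℝ) 1}ᶜ :=
    ((measurable_snd.comp measurable_snd) measurableSet_Icc).compl
  rw [ae_iff, obsLaw_eq]
  refine (Measure.bind_apply hs (Kernel.aemeasurable _)).trans ?_
  refine (lintegral_congr fun x => ?_).trans lintegral_zero
  change (Measure.sum fun a =>
    ENNReal.ofReal (S.μb x a) • (S.rker x a).map fun ρ => (x, a, ρ)) _ = 0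
  simp only [Measure.sum_apply _ hs, Measure.smul_apply, smul_eq_mul, ENNReal.tsum_eq_zero]
  intro a
  rw [Measure.map_apply (by fun_prop) hs]
  exact mul_eq_zero_of_right _ (S.rker_supp x a)

lemma integrable_obsLaw (S : CBSetup 𝓧 𝓐) {f : 𝓧 × 𝓐 × ℝ → ℝ} (hf : Measurable f) (M : ℝ)
    (hM : ∀ x a, ∀ ρ ∈ Set.Icc (0 : ℝ) 1, |f (x, a, ρ)| ≤ M) : Integrable f (obsLaw S) := by
  refine Integrable.of_bound hf.aestronglyMeasurable M ?_
  filter_upwards [obsLaw_ae S] with ω hω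
  exact hM _ _ _ hω

/-- Disintegration of the law of one observation along context, action and reward. -/
lemma integral_obsLaw (S : CBSetup 𝓧 𝓐) {f : 𝓧 × 𝓐 × ℝ → ℝ} (hf : Measurable f) (M : ℝ)
    (hM : ∀ x a, ∀ ρ ∈ Set.Icc (0 : ℝ) 1, |f (x, a, ρ)| ≤ M) :
    ∫ ω, f ω ∂(obsLaw S) = ∫ x, ∑ a, S.μb x a * ∫ ρ, f (x, a, ρ) ∂(S.rker x a) ∂S.ν := by
  have hi := integrable_obsLaw S hf M hM
  have e : obsLaw S = (obsKernel S ∘ₖ Kernel.const Unit S.ν) () := by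
    rw [Kernel.comp_apply, Kernel.const_apply, obsLaw_eq]
  rw [e] at hi ⊢
  rw [Kernel.integral_comp hi, Kernel.const_apply]
  refine integral_congr_ae (Filter.Eventually.of_forall fun x => ?_)
  change ∫ ω, f ω ∂(Measure.sum fun a =>
    ENNReal.ofReal (S.μb x a) • (S.rker x a).map fun ρ => (x, a, ρ)) = _
  rw [Measure.sum_fintype, integral_finsetSum_measure]
  · refine Finset.sum_congr rfl fun a _ => ?_
    rw [integral_smul_measure, integral_map (by fun_prop) hf.aestronglyMeasurable,
      ENNReal.toReal_ofReal (S.μb_nonneg x a), smul_eq_mul]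
  · intro a _
    have := S.rker_prob x a
    refine Integrable.smul_measure ?_ ENNReal.ofReal_ne_top
    rw [integrable_map_measure hf.aestronglyMeasurable (by fun_prop)]
    refine Integrable.of_bound (hf.comp (by fun_prop)).aestronglyMeasurable M ?_
    filter_upwards [rker_ae S x a] with ρ hρ
    exact hM _ _ _ hρ

lemma r_mem (S : CBSetup 𝓧 𝓐) (x : 𝓧) (a : 𝓐) : S.r x a ∈ Set.Icc (0 : ℝ) 1 := by
  have := S.rker_prob x a
  have h := rker_ae S x a
  rw [S.r_def]
  refine ⟨integral_nonneg_of_ae (h.mono fun ρ hρ => hρ.1), ?_⟩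
  have hi : Integrable (fun ρ : ℝ => ρ) (S.rker x a) :=
    Integrable.of_bound measurable_id.aestronglyMeasurable 1
      (h.mono fun ρ hρ => by rw [Real.norm_eq_abs, abs_of_nonneg hρ.1]; exact hρ.2)
  calc ∫ ρ, ρ ∂(S.rker x a) ≤ ∫ _, (1 : ℝ) ∂(S.rker x a) :=
        integral_mono_ae hi (integrable_const _) (h.mono fun ρ hρ => hρ.2)
    _ = 1 := by simp

lemma IsPolicy.le_one {π : 𝓧 → 𝓐 → ℝ} (hπ : IsPolicy π) (x : 𝓧) (a : 𝓐) : π x a ≤ 1 := by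
  rw [← hπ.2.1 x]
  exact Finset.single_le_sum (fun b _ => hπ.1 x b) (Finset.mem_univ a)

lemma measurable_ixTerm (S : CBSetup 𝓧 𝓐) (γ : ℝ) {π : 𝓧 → 𝓐 → ℝ} (hπ : IsPolicy π) :
    Measurable (ixTerm S γ π) := by
  have h1 : Measurable fun p : 𝓧 × 𝓐 => π p.1 p.2 := measurable_from_prod_countable_left hπ.2.2
  have h2 : Measurable fun p : 𝓧 × 𝓐 => S.μb p.1 p.2 :=
    measurable_from_prod_countable_left S.μb_meas
  have hp : Measurable fun ω : 𝓧 × 𝓐 × ℝ => (ω.1, ω.2.1) := by fun_prop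
  exact ((h1.comp hp).mul (measurable_snd.comp measurable_snd)).div
    ((h2.comp hp).add measurable_const)

lemma ixTerm_mem (S : CBSetup 𝓧 𝓐) {γ : ℝ} (hγ : 0 < γ) {π : 𝓧 → 𝓐 → ℝ} (hπ : IsPolicy π)
    (x : 𝓧) (a : 𝓐) {ρ : ℝ} (hρ : ρ ∈ Set.Icc (0 : ℝ) 1) :
    0 ≤ ixTerm S γ π (x, a, ρ) ∧ ixTerm S γ π (x, a, ρ) ≤ 1 / γ := by
  have h1 := hπ.1 x a
  have h2 := hπ.le_one x a
  have h3 := S.μb_nonneg x a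
  obtain ⟨h4, h5⟩ := hρ
  refine ⟨by unfold ixTerm; positivity, ?_⟩
  unfold ixTerm
  exact div_le_div₀ zero_le_one (mul_le_one₀ h2 h4 h5) hγ (by simpa using h3)

lemma integrable_of_Icc (S : CBSetup 𝓧 𝓐) {f : 𝓧 → ℝ} (hf : Measurable f) (M : ℝ)
    (h : ∀ x, f x ∈ Set.Icc 0 M) : Integrable f S.ν := by
  have := S.ν_prob
  refine Integrable.of_bound hf.aestronglyMeasurable M (Filter.Eventually.of_forall fun x => ?_)
  rw [Real.norm_eq_abs, abs_of_nonneg (h x).1]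
  exact (h x).2

lemma integrable_pval (S : CBSetup 𝓧 𝓐) {π : 𝓧 → 𝓐 → ℝ} (hπ : IsPolicy π) :
    Integrable (fun x => ∑ a, π x a * S.r x a) S.ν := by
  refine integrable_finsetSum _ fun a _ =>
    integrable_of_Icc S ((hπ.2.2 a).mul (S.r_meas a)) 1 fun x => ?_
  obtain ⟨h1, h2⟩ := r_mem S x a
  exact ⟨mul_nonneg (hπ.1 x a) h1, mul_le_one₀ (hπ.le_one x a) h1 h2⟩

lemma integrable_covγ (S : CBSetup 𝓧 𝓐) {γ : ℝ} (hγ : 0 < γ) {π : 𝓧 → 𝓐 → ℝ}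
    (hπ : IsPolicy π) :
    Integrable (fun x => ∑ a, π x a * S.r x a / (S.μb x a + γ)) S.ν := by
  refine integrable_finsetSum _ fun a _ =>
    integrable_of_Icc S (((hπ.2.2 a).mul (S.r_meas a)).div ((S.μb_meas a).add_const γ)) (1 / γ)
      fun x => ixTerm_mem S hγ hπ x a (r_mem S x a)

lemma integral_ixTerm (S : CBSetup 𝓧 𝓐) {γ : ℝ} (hγ : 0 < γ) {π : 𝓧 → 𝓐 → ℝ}
    (hπ : IsPolicy π) : ∫ ω, ixTerm S γ π ω ∂(obsLaw S) = pval S π - γ * covγ S γ π := by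
  rw [integral_obsLaw S (measurable_ixTerm S γ hπ) (1 / γ) fun x a ρ hρ => by
    obtain ⟨h1, h2⟩ := ixTerm_mem S hγ hπ x a hρ
    rwa [abs_of_nonneg h1], pval, covγ, ← integral_const_mul,
    ← integral_sub (integrable_pval S hπ) ((integrable_covγ S hγ hπ).const_mul γ)]
  refine integral_congr_ae (Filter.Eventually.of_forall fun x => ?_)
  simp only [Finset.mul_sum, ← Finset.sum_sub_distrib]
  refine Finset.sum_congr rfl fun a _ => ?_
  have hne : S.μb x a + γ ≠ 0 := by linarith [S.μb_nonneg x a]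
  simp only [ixTerm]
  rw [integral_div, integral_const_mul, ← S.r_def]
  field_simp
  ring

lemma integral_ixTerm_sq_le (S : CBSetup 𝓧 𝓐) {γ : ℝ} (hγ : 0 < γ) {π : 𝓧 → 𝓐 → ℝ}
    (hπ : IsPolicy π) : ∫ ω, ixTerm S γ π ω ^ 2 ∂(obsLaw S) ≤ covγ S γ π := by
  rw [integral_obsLaw S ((measurable_ixTerm S γ hπ).pow_const 2) ((1 / γ) ^ 2) fun x a ρ hρ => by
    obtain ⟨h1, h2⟩ := ixTerm_mem S hγ hπ x a hρ
    rw [abs_of_nonneg (by positivity)]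
    gcongr, covγ]
  refine integral_mono_of_nonneg (Filter.Eventually.of_forall fun x =>
    Finset.sum_nonneg fun a _ => mul_nonneg (S.μb_nonneg x a)
      (integral_nonneg fun ρ => sq_nonneg _)) (integrable_covγ S hγ hπ)
    (Filter.Eventually.of_forall fun x => Finset.sum_le_sum fun a _ => ?_)
  have := S.rker_prob x a
  have hm := S.μb_nonneg x a
  have hp := hπ.1 x a
  have hp1 := hπ.le_one x a
  have hi : Integrable (fun ρ => π x a * ρ / (S.μb x a + γ)) (S.rker x a) := by
    refine ((Integrable.of_bound measurable_id.aestronglyMeasurable 1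
      ((rker_ae S x a).mono fun ρ hρ => ?_) : Integrable (fun ρ : ℝ => ρ) _).const_mul _).div_const _
    rw [Real.norm_eq_abs, abs_of_nonneg hρ.1]
    exact hρ.2
  rw [← integral_const_mul]
  calc ∫ ρ, S.μb x a * ixTerm S γ π (x, a, ρ) ^ 2 ∂(S.rker x a)
      ≤ ∫ ρ, π x a * ρ / (S.μb x a + γ) ∂(S.rker x a) := by
        refine integral_mono_of_nonneg (Filter.Eventually.of_forall fun ρ => by positivity) hi
          ((rker_ae S x a).mono fun ρ hρ => ?_)
        obtain ⟨h4, h5⟩ := hρ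
        have hk : S.μb x a * (π x a * ρ / (S.μb x a + γ)) ≤ 1 := by
          have h6 : π x a * ρ ≤ 1 := mul_le_one₀ hp1 h4 h5
          rw [← mul_div_assoc, div_le_one (by positivity)]
          nlinarith
        have h0 : 0 ≤ π x a * ρ / (S.μb x a + γ) := by positivity
        simp only [ixTerm]
        nlinarith
    _ = π x a * S.r x a / (S.μb x a + γ) := by
        rw [integral_div, integral_const_mul, ← S.r_def]

/-- The second-order Taylor polynomial of `exp (-y)` is an upper bound on `[0, ∞)`: it suffices that
`exp y * (1 - y + y² / 2) ≥ 1`, and `exp y ≥ 1 + y + y² / 2`. -/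
lemma exp_neg_le_quadratic {y : ℝ} (hy : 0 ≤ y) : Real.exp (-y) ≤ 1 - y + y ^ 2 / 2 := by
  have h := Real.quadratic_le_exp_of_nonneg hy
  have hq : 0 < 1 - y + y ^ 2 / 2 := by nlinarith [sq_nonneg (y - 1)]
  rw [Real.exp_neg, inv_le_iff_one_le_mul₀ (Real.exp_pos y)]
  -- `(1 + y²/2 - y) (1 + y²/2 + y) = 1 + y⁴/4`
  nlinarith [mul_le_mul_of_nonneg_left h hq.le, sq_nonneg (y ^ 2)]

lemma integral_exp_ixTerm_le (S : CBSetup 𝓧 𝓐) {γ : ℝ} (hγ : 0 < γ) {π : 𝓧 → 𝓐 → ℝ}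
    (hπ : IsPolicy π) :
    ∫ ω, Real.exp (2 * γ *
      (pval S π - γ * covγ S γ π - ixTerm S γ π ω - γ * covγ S γ π)) ∂(obsLaw S) ≤ 1 := by
  have hY : Integrable (ixTerm S γ π) (obsLaw S) :=
    integrable_obsLaw S (measurable_ixTerm S γ hπ) (1 / γ) fun x a ρ hρ => by
      obtain ⟨h1, h2⟩ := ixTerm_mem S hγ hπ x a hρ
      rwa [abs_of_nonneg h1]
  have hY2 : Integrable (fun ω => ixTerm S γ π ω ^ 2) (obsLaw S) :=
    integrable_obsLaw S ((measurable_ixTerm S γ hπ).pow_const 2) ((1 / γ) ^ 2) fun x a ρ hρ => by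
      obtain ⟨h1, h2⟩ := ixTerm_mem S hγ hπ x a hρ
      rw [abs_of_nonneg (by positivity)]
      gcongr
  have hmean := integral_ixTerm S hγ hπ
  have hsq := integral_ixTerm_sq_le S hγ hπ
  set v := pval S π
  set C := covγ S γ π
  set u := 2 * γ * (v - γ * C - γ * C) with hu
  have hsplit : ∀ ω, Real.exp (2 * γ * (v - γ * C - ixTerm S γ π ω - γ * C)) =
      Real.exp u * Real.exp (-(2 * γ * ixTerm S γ π ω)) := fun ω => by
    rw [← Real.exp_add]
    congr 1
    ring
  have hmgf : ∫ ω, Real.exp (-(2 * γ * ixTerm S γ π ω)) ∂(obsLaw S) ≤ 1 - u := by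
    have hi1 : Integrable (fun ω => 1 - 2 * γ * ixTerm S γ π ω) (obsLaw S) :=
      (integrable_const _).sub (hY.const_mul _)
    have hi2 : Integrable (fun ω => 2 * γ ^ 2 * ixTerm S γ π ω ^ 2) (obsLaw S) :=
      hY2.const_mul _
    calc ∫ ω, Real.exp (-(2 * γ * ixTerm S γ π ω)) ∂(obsLaw S)
        ≤ ∫ ω, ((1 - 2 * γ * ixTerm S γ π ω) + 2 * γ ^ 2 * ixTerm S γ π ω ^ 2) ∂(obsLaw S) := by
          refine integral_mono_of_nonneg (Filter.Eventually.of_forall fun ω => by positivity)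
            (hi1.add hi2) ?_
          filter_upwards [obsLaw_ae S] with ω hω
          have h0 := (ixTerm_mem S hγ hπ ω.1 ω.2.1 hω).1
          refine (exp_neg_le_quadratic (mul_nonneg (by positivity) h0)).trans (le_of_eq ?_)
          ring
      _ = (1 - 2 * γ * (v - γ * C)) +
            2 * γ ^ 2 * ∫ ω, ixTerm S γ π ω ^ 2 ∂(obsLaw S) := by
          rw [integral_add hi1 hi2, integral_sub (integrable_const _) (hY.const_mul _),
            integral_const_mul, integral_const_mul, hmean]
          simp
      _ ≤ (1 - 2 * γ * (v - γ * C)) + 2 * γ ^ 2 * C := by gcongr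
      _ = 1 - u := by rw [hu]; ring
  simp only [hsplit, integral_const_mul]
  calc Real.exp u * ∫ ω, Real.exp (-(2 * γ * ixTerm S γ π ω)) ∂(obsLaw S)
      ≤ Real.exp u * Real.exp (-u) := by
        gcongr
        linarith [Real.add_one_le_exp (-u)]
    _ = 1 := by rw [← Real.exp_add, add_neg_cancel, Real.exp_zero]

/-- lower-tail exponential-moment bound for the IX estimator: the IX reward
estimate has mean `E[r̃(π)] = v(π) − γ C_γ(π)`, and for i.i.d. observations,
`E[exp(2γ Σ_t (E[r̃_t(π)] − r̃_t(π) − γ C_γ(π)))] ≤ 1`. -/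
theorem ix_lower_tail_mgf_bound
    (S : CBSetup 𝓧 𝓐) (γ : ℝ) (hγ : 0 < γ)
    (π : 𝓧 → 𝓐 → ℝ) (hπ : IsPolicy π) (n : ℕ) :
    (∫ ω, ixTerm S γ π ω ∂(obsLaw S)) = pval S π - γ * covγ S γ π ∧
    (∫ D, Real.exp (2 * γ * ∑ t,
        (pval S π - γ * covγ S γ π - ixTerm S γ π (D t) - γ * covγ S γ π))
      ∂(dataLaw S n)) ≤ 1 := by
  refine ⟨integral_ixTerm S hγ hπ, ?_⟩
  simp only [Finset.mul_sum, Real.exp_sum, dataLaw]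
  rw [integral_fintype_prod_eq_pow (fun ω => Real.exp (2 * γ *
    (pval S π - γ * covγ S γ π - ixTerm S γ π ω - γ * covγ S γ π)))]
  exact pow_le_one₀ (integral_nonneg fun ω => (Real.exp_pos _).le) (integral_exp_ixTerm_le S hγ hπ)
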